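/- Let K be a field, m ≥ 2, N ≥ 1, and Λ_N the algebra above. Then for any two vertices i, j: dim_K e_i Λ_N e_j = 2N if i = j; dim_K e_i Λ_N e_j = N if i − j ≡ ±1 (mod m) and m ≥ 3; and e_i Λ_N e_j = 0 otherwise (for m ≥ 3). In particular dim_K Λ_N = 4Nm for m ≥ 3. -/

import Mathlib

/-- Generators of the path algebra of the cyclic double quiver:
trivial paths `e i`, arrows `a i : i → i+1` and `abar i : i+1 → i`. -/
inductive Gen (m : ℕ) : Type
  | e (i : ZMod m)
  | a (i : ZMod m)
  | abar (i : ZMod m)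

variable (K : Type) [Field K] (m N : ℕ) [NeZero m]

/-- The trivial path `e i` in the free algebra. -/
def Efree (i : ZMod m) : FreeAlgebra K (Gen m) := FreeAlgebra.ι K (Gen.e i)
/-- The arrow `a_i : i → i+1` in the free algebra. -/
def Afree (i : ZMod m) : FreeAlgebra K (Gen m) := FreeAlgebra.ι K (Gen.a i)
/-- The arrow `ā_i : i+1 → i` in the free algebra. -/
def ABfree (i : ZMod m) : FreeAlgebra K (Gen m) := FreeAlgebra.ι K (Gen.abar i)

/-- The defining relations of `Λ_N = KQ/I_N`: the path algebra relations for the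
quiver `Q` together with the relations generating `I_N`. -/
inductive LamRel : FreeAlgebra K (Gen m) → FreeAlgebra K (Gen m) → Prop
  | idem (i : ZMod m) : LamRel (Efree K m i * Efree K m i) (Efree K m i)
  | orth (i j : ZMod m) (h : i ≠ j) : LamRel (Efree K m i * Efree K m j) 0
  | sum_e : LamRel (∑ i : ZMod m, Efree K m i) 1
  | src_a (i : ZMod m) : LamRel (Efree K m i * Afree K m i) (Afree K m i)
  | tgt_a (i : ZMod m) : LamRel (Afree K m i * Efree K m (i + 1)) (Afree K m i)
  | src_ab (i : ZMod m) : LamRel (Efree K m (i + 1) * ABfree K m i) (ABfree K m i)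
  | tgt_ab (i : ZMod m) : LamRel (ABfree K m i * Efree K m i) (ABfree K m i)
  | zero_aa (i : ZMod m) : LamRel (Afree K m i * Afree K m (i + 1)) 0
  | zero_abab (i : ZMod m) : LamRel (ABfree K m i * ABfree K m (i - 1)) 0
  | comm (i : ZMod m) :
      LamRel ((Afree K m i * ABfree K m i) ^ N) ((ABfree K m (i - 1) * Afree K m (i - 1)) ^ N)

/-- The special biserial algebra `Λ_N = KQ/I_N`. -/
abbrev Lam : Type := RingQuot (LamRel K m N)

/-- The trivial path `e_i` in `Λ_N`. -/
def e (i : ZMod m) : Lam K m N := RingQuot.mkAlgHom K (LamRel K m N) (Efree K m i)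
/-- The arrow `a_i` in `Λ_N`. -/
def a (i : ZMod m) : Lam K m N := RingQuot.mkAlgHom K (LamRel K m N) (Afree K m i)
/-- The arrow `ā_i` in `Λ_N`. -/
def ab (i : ZMod m) : Lam K m N := RingQuot.mkAlgHom K (LamRel K m N) (ABfree K m i)

/-- The corner space `e_i Λ_N e_j`, as the range of `x ↦ e_i * x * e_j`. -/
def corner (i j : ZMod m) : Submodule K (Lam K m N) :=
  LinearMap.range
    ((LinearMap.mulLeft K (e K m N i)).comp (LinearMap.mulRight K (e K m N j)))

/-!
Every nonzero path alternates between arrows `a` and `ā`, so it is determined by its source `i` and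
a signed length `l`, positive when it starts with `a` and negative when it starts with `ā`. Left
multiplication by an arrow sends `l` to `1 - l` or `-1 - l`, paths with `2N < |l|` vanish, and
`(a_i ā_i)^N = (ā_{i-1} a_{i-1})^N` glues `l = 2N` to `l = -2N`. Hence signed lengths live in
`ZMod (4N)`. The free vector space on `ZMod m × ZMod (4N)` carries the action of `Λ_N` that these
rules prescribe, and acting on the sum of the trivial paths identifies `Λ_N` with it. Counting the
signed lengths whose path ends at a given vertex yields the dimensions.
-/

theorem finrank_range_of_basis_apply_eq_ite {ι R M : Type*} [Fintype ι] [Ring R]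
    [StrongRankCondition R] [AddCommGroup M] [Module R M] (b : Module.Basis ι R M)
    (P : ι → Prop) [DecidablePred P] {f : M →ₗ[R] M}
    (hf : ∀ p, f (b p) = if P p then b p else 0) :
    Module.finrank R (LinearMap.range f) = Fintype.card {p // P p} := by
  have : Nontrivial R := nontrivial_of_invariantBasisNumber R
  have range_eq : LinearMap.range f =
      Submodule.span R (Set.range fun p : {p // P p} => b p) := by
    apply le_antisymm
    · rw [LinearMap.range_eq_map, ← b.span_eq, Submodule.map_span, Submodule.span_le]
      rintro _ ⟨_, ⟨p, rfl⟩, rfl⟩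
      rw [SetLike.mem_coe, hf]
      split_ifs with hp
      · exact Submodule.subset_span ⟨⟨p, hp⟩, rfl⟩
      · exact zero_mem _
    · rw [Submodule.span_le]
      rintro _ ⟨p, rfl⟩
      exact ⟨b p, by rw [hf, if_pos p.2]⟩
  rw [range_eq]
  exact finrank_span_eq_card (b.linearIndependent.comp _ Subtype.val_injective)

namespace Lam

section Relations

variable {K m N}

theorem mkAlgHom_eq_of_rel {x y : FreeAlgebra K (Gen m)} (h : LamRel K m N x y) :
    RingQuot.mkAlgHom K (LamRel K m N) x = RingQuot.mkAlgHom K (LamRel K m N) y :=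
  RingQuot.mkAlgHom_rel K h

theorem e_mul_e (i j : ZMod m) : e K m N i * e K m N j = if i = j then e K m N i else 0 := by
  split_ifs with h
  · subst h
    simpa [e] using mkAlgHom_eq_of_rel (LamRel.idem (K := K) (N := N) i)
  · simpa [e] using mkAlgHom_eq_of_rel (LamRel.orth (K := K) (N := N) i j h)

theorem sum_e : ∑ i : ZMod m, e K m N i = 1 := by
  simpa [e] using mkAlgHom_eq_of_rel (LamRel.sum_e (K := K) (m := m) (N := N))

theorem e_mul_a (i : ZMod m) : e K m N i * a K m N i = a K m N i := by
  simpa [e, a] using mkAlgHom_eq_of_rel (LamRel.src_a (K := K) (N := N) i)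

theorem a_mul_e (i : ZMod m) : a K m N i * e K m N (i + 1) = a K m N i := by
  simpa [e, a] using mkAlgHom_eq_of_rel (LamRel.tgt_a (K := K) (N := N) i)

theorem e_mul_ab (i : ZMod m) : e K m N (i + 1) * ab K m N i = ab K m N i := by
  simpa [e, ab] using mkAlgHom_eq_of_rel (LamRel.src_ab (K := K) (N := N) i)

theorem ab_mul_e (i : ZMod m) : ab K m N i * e K m N i = ab K m N i := by
  simpa [e, ab] using mkAlgHom_eq_of_rel (LamRel.tgt_ab (K := K) (N := N) i)

theorem a_mul_a (i : ZMod m) : a K m N i * a K m N (i + 1) = 0 := by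
  simpa [a] using mkAlgHom_eq_of_rel (LamRel.zero_aa (K := K) (N := N) i)

theorem ab_mul_ab (i : ZMod m) : ab K m N i * ab K m N (i - 1) = 0 := by
  simpa [ab] using mkAlgHom_eq_of_rel (LamRel.zero_abab (K := K) (N := N) i)

theorem a_mul_ab_pow (i : ZMod m) :
    (a K m N i * ab K m N i) ^ N = (ab K m N (i - 1) * a K m N (i - 1)) ^ N := by
  simpa [a, ab] using mkAlgHom_eq_of_rel (LamRel.comm (K := K) (N := N) i)

end Relations

/-- The alternating path of length `|l|` starting at the vertex `i`: its first arrow is `a_i` if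
`0 < l` and `ā_{i-1}` if `l < 0`. -/
noncomputable def path (i : ZMod m) (l : ℤ) : Lam K m N :=
  if 0 < l then a K m N i * path (i + 1) (1 - l)
  else if l < 0 then ab K m N (i - 1) * path (i - 1) (-1 - l)
  else e K m N i
termination_by l.natAbs

/-- The end vertex of the alternating path of signed length `l` starting at `i`. -/
def pathTarget {m : ℕ} (i : ZMod m) (l : ℤ) : ZMod m :=
  if Even l then i else if 0 < l then i + 1 else i - 1

theorem pathTarget_of_pos {m : ℕ} (i : ZMod m) {l : ℤ} (hl : 0 < l) :
    pathTarget i l = pathTarget (i + 1) (1 - l) := by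
  by_cases h : Even l
  · have : 1 < l := by
      obtain ⟨k, rfl⟩ := h
      omega
    simp [pathTarget, h, Int.even_sub, this.not_gt]
  · simp [pathTarget, h, hl, Int.even_sub]

theorem pathTarget_of_neg {m : ℕ} (i : ZMod m) {l : ℤ} (hl : l < 0) :
    pathTarget i l = pathTarget (i - 1) (-1 - l) := by
  by_cases h : Even l
  · have : l < -1 := by
      obtain ⟨k, rfl⟩ := h
      omega
    simp [pathTarget, h, Int.even_sub, this]
  · simp [pathTarget, h, hl.not_gt, Int.even_sub]

section Paths

variable {K m N}

@[simp]
theorem path_zero (i : ZMod m) : path K m N i 0 = e K m N i := by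
  rw [path]
  simp

theorem path_of_pos (i : ZMod m) {l : ℤ} (hl : 0 < l) :
    path K m N i l = a K m N i * path K m N (i + 1) (1 - l) := by
  rw [path, if_pos hl]

theorem path_of_neg (i : ZMod m) {l : ℤ} (hl : l < 0) :
    path K m N i l = ab K m N (i - 1) * path K m N (i - 1) (-1 - l) := by
  rw [path, if_neg hl.not_gt, if_pos hl]

theorem e_mul_path (j i : ZMod m) (l : ℤ) :
    e K m N j * path K m N i l = if i = j then path K m N i l else 0 := by
  have source : e K m N i * path K m N i l = path K m N i l := by
    rcases lt_trichotomy l 0 with hl | rfl | hl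
    · have h := e_mul_ab (K := K) (N := N) (i - 1)
      rw [sub_add_cancel] at h
      rw [path_of_neg i hl, ← mul_assoc, h]
    · simp [e_mul_e]
    · rw [path_of_pos i hl, ← mul_assoc, e_mul_a]
  split_ifs with h
  · rw [← h, source]
  · rw [← source, ← mul_assoc, e_mul_e, if_neg (Ne.symm h), zero_mul]

theorem a_mul_path (j i : ZMod m) (l : ℤ) :
    a K m N j * path K m N i l = if i = j + 1 ∧ l ≤ 0 then path K m N j (1 - l) else 0 := by
  by_cases hi : i = j + 1
  · subst hi
    rcases le_or_gt l 0 with hl | hl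
    · rw [if_pos ⟨rfl, hl⟩, path_of_pos j (by omega), sub_sub_cancel]
    · rw [if_neg (by omega), path_of_pos _ hl, ← mul_assoc, a_mul_a, zero_mul]
  · rw [if_neg (mt And.left hi), ← a_mul_e, mul_assoc, e_mul_path, if_neg hi, mul_zero]

theorem ab_mul_path (j i : ZMod m) (l : ℤ) :
    ab K m N j * path K m N i l = if i = j ∧ 0 ≤ l then path K m N (j + 1) (-1 - l) else 0 := by
  by_cases hi : i = j
  · subst hi
    rcases le_or_gt 0 l with hl | hl
    · rw [if_pos ⟨rfl, hl⟩, path_of_neg (i + 1) (by omega), sub_sub_cancel, add_sub_cancel_right]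
    · rw [if_neg (by omega), path_of_neg _ hl, ← mul_assoc, ab_mul_ab, zero_mul]
  · rw [if_neg (mt And.left hi), ← ab_mul_e, mul_assoc, e_mul_path, if_neg hi, mul_zero]

theorem path_mul_e_pathTarget (i : ZMod m) (l : ℤ) :
    path K m N i l * e K m N (pathTarget i l) = path K m N i l := by
  induction i, l using path.induct with
  | case1 i l hl ih => rw [path_of_pos i hl, mul_assoc, pathTarget_of_pos i hl, ih]
  | case2 i l _ hl ih => rw [path_of_neg i hl, mul_assoc, pathTarget_of_neg i hl, ih]
  | case3 i l hl hl' =>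
    obtain rfl : l = 0 := by omega
    simp [pathTarget, e_mul_e]

theorem path_mul_e (i j : ZMod m) (l : ℤ) :
    path K m N i l * e K m N j = if pathTarget i l = j then path K m N i l else 0 := by
  split_ifs with h
  · rw [← h, path_mul_e_pathTarget]
  · rw [← path_mul_e_pathTarget, mul_assoc, e_mul_e, if_neg h, mul_zero]

theorem path_two_mul (i : ZMod m) (k : ℕ) :
    path K m N i (2 * k) = (a K m N i * ab K m N i) ^ k * e K m N i := by
  induction k with
  | zero => simp
  | succ k ih =>
    rw [pow_succ', mul_assoc, ← ih, mul_assoc, ab_mul_path, if_pos ⟨rfl, by omega⟩, a_mul_path,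
      if_pos ⟨rfl, by omega⟩]
    congr 1
    push_cast
    ring

theorem path_neg_two_mul (i : ZMod m) (k : ℕ) :
    path K m N i (-(2 * k)) = (ab K m N (i - 1) * a K m N (i - 1)) ^ k * e K m N i := by
  induction k with
  | zero => simp
  | succ k ih =>
    rw [pow_succ', mul_assoc, ← ih, mul_assoc, a_mul_path, if_pos ⟨by ring, by omega⟩,
      ab_mul_path, if_pos ⟨rfl, by omega⟩, sub_add_cancel]
    congr 1
    push_cast
    ring

theorem path_neg_top (i : ZMod m) : path K m N i (-(2 * N)) = path K m N i (2 * N) := by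
  rw [path_neg_two_mul, path_two_mul, a_mul_ab_pow]

theorem path_eq_zero [NeZero N] (i : ZMod m) {l : ℤ} (hl : 2 * N < l.natAbs) :
    path K m N i l = 0 := by
  have hN : 0 < N := NeZero.pos N
  induction i, l using path.induct with
  | case1 i l hpos ih =>
    rw [path_of_pos i hpos]
    by_cases htop : l = 2 * N + 1
    · rw [htop, sub_add_cancel_right, path_neg_top, a_mul_path, if_neg (by omega)]
    · rw [ih (by omega), mul_zero]
  | case2 i l _ hneg ih =>
    rw [path_of_neg i hneg]
    by_cases htop : l = -(2 * N) - 1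
    · rw [htop, show (-1 - (-(2 * N) - 1) : ℤ) = 2 * N by ring, ← path_neg_top, ab_mul_path,
        if_neg (by omega)]
    · rw [ih (by omega), mul_zero]
  | case3 i l => omega

end Paths

/-- A family of vectors indexed by source and signed length that satisfies the two constraints on
signed lengths holding for the paths of `Λ_N`: it vanishes for `2N < |l|`, and it takes the same
value at `-2N` and `2N`. -/
structure IsTruncated {m : ℕ} (N : ℕ) {M : Type*} [Zero M] (v : ZMod m → ℤ → M) : Prop where
  eq_zero : ∀ i l, 2 * N < l.natAbs → v i l = 0
  neg_top : ∀ i, v i (-(2 * N : ℤ)) = v i (2 * N)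

/-- The vector space with basis the paths of `Λ_N`, given by their source and their signed length.
Signed lengths range over `(-2N, 2N]`, encoded as `ZMod (4N)` to identify `-2N` with `2N`. -/
abbrev PathSpace (K : Type) [Field K] (m N : ℕ) : Type := ZMod m × ZMod (4 * N) →₀ K

namespace PathSpace

variable (K : Type) [Field K] {m : ℕ} (N : ℕ)

section UniversalProperty

/-- The vector of the path with source `i` and signed length `l`, which is zero for `2N < |l|`. -/
noncomputable def vec (i : ZMod m) (l : ℤ) : PathSpace K m N :=
  if l.natAbs ≤ 2 * N then Finsupp.single (i, (l : ZMod (4 * N))) 1 else 0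

/-- The linear map out of the path space sending `vec i l` to `v i l`, for truncated `v`. -/
noncomputable def lift {M : Type*} [AddCommGroup M] [Module K M] (v : ZMod m → ℤ → M) :
    PathSpace K m N →ₗ[K] M :=
  Finsupp.linearCombination K fun p => v p.1 p.2.valMinAbs

variable {K N} {M : Type*} [AddCommGroup M] [Module K M]

theorem isTruncated_vec : IsTruncated N (vec K N : ZMod m → ℤ → PathSpace K m N) where
  eq_zero i l hl := if_neg hl.not_ge
  neg_top i := by
    have glue : ((-(2 * N) : ℤ) : ZMod (4 * N)) = ((2 * N : ℤ) : ZMod (4 * N)) := by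
      rw [ZMod.intCast_eq_intCast_iff_dvd_sub]
      exact ⟨1, by push_cast; ring⟩
    rw [vec, vec, glue, Int.natAbs_neg]

theorem lift_single (v : ZMod m → ℤ → M) (p : ZMod m × ZMod (4 * N)) :
    lift K N v (Finsupp.single p 1) = v p.1 p.2.valMinAbs := by
  simp [lift]

variable [NeZero N]

theorem valMinAbs_mem_Ioc (x : ZMod (4 * N)) :
    x.valMinAbs ∈ Finset.Ioc (-(2 * N) : ℤ) (2 * N) := by
  have h := x.valMinAbs_mem_Ioc
  push_cast [Set.mem_Ioc] at h
  rw [Finset.mem_Ioc]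
  omega

theorem valMinAbs_intCast {l : ℤ} (hl : l ∈ Finset.Ioc (-(2 * N) : ℤ) (2 * N)) :
    (l : ZMod (4 * N)).valMinAbs = l := by
  rw [Finset.mem_Ioc] at hl
  rw [ZMod.valMinAbs_spec, Set.mem_Ioc]
  push_cast
  exact ⟨rfl, by omega, by omega⟩

theorem single_eq_vec (p : ZMod m × ZMod (4 * N)) :
    (Finsupp.single p 1 : PathSpace K m N) = vec K N p.1 p.2.valMinAbs := by
  have h := Finset.mem_Ioc.1 (valMinAbs_mem_Ioc p.2)
  rw [vec, if_pos (by omega), ZMod.coe_valMinAbs]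

theorem lift_vec {v : ZMod m → ℤ → M} (hv : IsTruncated N v) (i : ZMod m) (l : ℤ) :
    lift K N v (vec K N i l) = v i l := by
  have hN : 0 < N := NeZero.pos N
  have lift_vec_of_mem {l : ℤ} (hl : l ∈ Finset.Ioc (-(2 * N) : ℤ) (2 * N)) :
      lift K N v (vec K N i l) = v i l := by
    have h := lift_single (K := K) v (i, (l : ZMod (4 * N)))
    rwa [single_eq_vec, valMinAbs_intCast hl] at h
  rcases lt_or_ge (2 * N) l.natAbs with hl | hl
  · rw [isTruncated_vec.eq_zero i l hl, map_zero, hv.eq_zero i l hl]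
  · by_cases hbot : l = -(2 * N)
    · rw [hbot, isTruncated_vec.neg_top, hv.neg_top, lift_vec_of_mem]
      rw [Finset.mem_Ioc]
      omega
    · apply lift_vec_of_mem
      rw [Finset.mem_Ioc]
      omega

theorem linearMap_ext {f g : PathSpace K m N →ₗ[K] M}
    (h : ∀ i l, f (vec K N i l) = g (vec K N i l)) : f = g := by
  refine Finsupp.lhom_ext' fun p => LinearMap.ext_ring ?_
  simpa only [LinearMap.comp_apply, Finsupp.lsingle_apply, single_eq_vec] using h _ _

end UniversalProperty

section Action

/-- The action of the trivial path `e_j` on the path space. -/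
noncomputable def actE (j : ZMod m) : Module.End K (PathSpace K m N) :=
  lift K N fun i l => if i = j then vec K N i l else 0

/-- The action of the arrow `a_j` on the path space, modelled on `Lam.a_mul_path`. -/
noncomputable def actA (j : ZMod m) : Module.End K (PathSpace K m N) :=
  lift K N fun i l => if i = j + 1 ∧ l ≤ 0 then vec K N j (1 - l) else 0

/-- The action of the arrow `ā_j` on the path space, modelled on `Lam.ab_mul_path`. -/
noncomputable def actAB (j : ZMod m) : Module.End K (PathSpace K m N) :=
  lift K N fun i l => if i = j ∧ 0 ≤ l then vec K N (j + 1) (-1 - l) else 0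

/-- The action of the generators of `Λ_N` on the path space. -/
noncomputable def actGen : Gen m → Module.End K (PathSpace K m N)
  | .e i => actE K N i
  | .a i => actA K N i
  | .abar i => actAB K N i

variable {K N} [NeZero N]

theorem actE_vec (j i : ZMod m) (l : ℤ) :
    actE K N j (vec K N i l) = if i = j then vec K N i l else 0 := by
  refine lift_vec ⟨fun i l hl => ?_, fun i => ?_⟩ i l
  · rw [isTruncated_vec.eq_zero i l hl, ite_self]
  · rw [isTruncated_vec.neg_top]

theorem actA_vec (j i : ZMod m) (l : ℤ) :
    actA K N j (vec K N i l) = if i = j + 1 ∧ l ≤ 0 then vec K N j (1 - l) else 0 := by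
  have hN : 0 < N := NeZero.pos N
  refine lift_vec ⟨fun i l hl => ?_, fun i => ?_⟩ i l
  · exact ite_eq_right_iff.2 fun h => isTruncated_vec.eq_zero _ _ (by omega)
  · rw [isTruncated_vec.eq_zero _ (1 - -(2 * N)) (by omega), ite_self, if_neg (by omega)]

theorem actAB_vec (j i : ZMod m) (l : ℤ) :
    actAB K N j (vec K N i l) = if i = j ∧ 0 ≤ l then vec K N (j + 1) (-1 - l) else 0 := by
  have hN : 0 < N := NeZero.pos N
  refine lift_vec ⟨fun i l hl => ?_, fun i => ?_⟩ i l
  · exact ite_eq_right_iff.2 fun h => isTruncated_vec.eq_zero _ _ (by omega)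
  · rw [isTruncated_vec.eq_zero _ (-1 - 2 * N) (by omega), ite_self, if_neg (by omega)]

theorem actE_mul_actE (j k : ZMod m) :
    actE K N j * actE K N k = if j = k then actE K N j else 0 := by
  refine linearMap_ext fun i l => ?_
  rw [Module.End.mul_apply, actE_vec]
  rcases eq_or_ne j k with rfl | hjk
  · by_cases hi : i = j <;> simp [actE_vec, hi]
  · by_cases hi : i = k <;> simp [actE_vec, hi, hjk, hjk.symm]

theorem sum_actE [NeZero m] : ∑ j : ZMod m, actE K N j = 1 := by
  refine linearMap_ext fun i l => ?_
  simp [actE_vec]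

theorem actE_mul_actA (j : ZMod m) : actE K N j * actA K N j = actA K N j := by
  refine linearMap_ext fun i l => ?_
  rw [Module.End.mul_apply, actA_vec]
  split_ifs <;> simp [actE_vec]

theorem actA_mul_actE (j : ZMod m) : actA K N j * actE K N (j + 1) = actA K N j := by
  refine linearMap_ext fun i l => ?_
  rw [Module.End.mul_apply, actE_vec]
  split_ifs with hi <;> simp [actA_vec, hi]

theorem actE_mul_actAB (j : ZMod m) : actE K N (j + 1) * actAB K N j = actAB K N j := by
  refine linearMap_ext fun i l => ?_
  rw [Module.End.mul_apply, actAB_vec]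
  split_ifs <;> simp [actE_vec]

theorem actAB_mul_actE (j : ZMod m) : actAB K N j * actE K N j = actAB K N j := by
  refine linearMap_ext fun i l => ?_
  rw [Module.End.mul_apply, actE_vec]
  split_ifs with hi <;> simp [actAB_vec, hi]

theorem actA_mul_actA (j k : ZMod m) : actA K N j * actA K N k = 0 := by
  refine linearMap_ext fun i l => ?_
  rw [Module.End.mul_apply, actA_vec]
  split_ifs with hi
  · rw [actA_vec, if_neg (by omega), LinearMap.zero_apply]
  · simp

theorem actAB_mul_actAB (j k : ZMod m) : actAB K N j * actAB K N k = 0 := by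
  refine linearMap_ext fun i l => ?_
  rw [Module.End.mul_apply, actAB_vec]
  split_ifs with hi
  · rw [actAB_vec, if_neg (by omega), LinearMap.zero_apply]
  · simp

theorem actA_mul_actAB_vec (j i : ZMod m) (l : ℤ) :
    (actA K N j * actAB K N j) (vec K N i l) =
      if i = j ∧ 0 ≤ l then vec K N j (l + 2) else 0 := by
  rw [Module.End.mul_apply, actAB_vec]
  split_ifs with h
  · rw [actA_vec, if_pos ⟨rfl, by omega⟩]
    ring_nf
  · exact map_zero _

theorem actAB_mul_actA_vec (j i : ZMod m) (l : ℤ) :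
    (actAB K N j * actA K N j) (vec K N i l) =
      if i = j + 1 ∧ l ≤ 0 then vec K N (j + 1) (l - 2) else 0 := by
  rw [Module.End.mul_apply, actA_vec]
  split_ifs with h
  · rw [actAB_vec, if_pos ⟨rfl, by omega⟩]
    ring_nf
  · exact map_zero _

theorem actA_mul_actAB_pow_vec (j i : ZMod m) (l : ℤ) (k : ℕ) :
    ((actA K N j * actAB K N j) ^ (k + 1)) (vec K N i l) =
      if i = j ∧ 0 ≤ l then vec K N j (l + 2 * (k + 1)) else 0 := by
  induction k with
  | zero => simpa using actA_mul_actAB_vec j i l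
  | succ k ih =>
    rw [pow_succ', Module.End.mul_apply, ih]
    split_ifs with h
    · rw [actA_mul_actAB_vec, if_pos ⟨rfl, by omega⟩]
      push_cast
      ring_nf
    · exact map_zero _

theorem actAB_mul_actA_pow_vec (j i : ZMod m) (l : ℤ) (k : ℕ) :
    ((actAB K N j * actA K N j) ^ (k + 1)) (vec K N i l) =
      if i = j + 1 ∧ l ≤ 0 then vec K N (j + 1) (l - 2 * (k + 1)) else 0 := by
  induction k with
  | zero => simpa using actAB_mul_actA_vec j i l
  | succ k ih =>
    rw [pow_succ', Module.End.mul_apply, ih]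
    split_ifs with h
    · rw [actAB_mul_actA_vec, if_pos ⟨rfl, by omega⟩]
      push_cast
      ring_nf
    · exact map_zero _

theorem actA_mul_actAB_pow (j : ZMod m) :
    (actA K N j * actAB K N j) ^ N = (actAB K N (j - 1) * actA K N (j - 1)) ^ N := by
  refine linearMap_ext fun i l => ?_
  obtain ⟨n, hn⟩ : ∃ n, N = n + 1 := Nat.exists_eq_succ_of_ne_zero (NeZero.ne N)
  have hn' : (n + 1 : ℤ) = N := by exact_mod_cast hn.symm
  have pow_left := actA_mul_actAB_pow_vec (K := K) (N := N) j i l n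
  have pow_right := actAB_mul_actA_pow_vec (K := K) (N := N) (j - 1) i l n
  rw [← hn, hn'] at pow_left pow_right
  rw [pow_left, pow_right, sub_add_cancel]
  rcases lt_trichotomy l 0 with hl | rfl | hl
  · rw [if_neg (by omega), isTruncated_vec.eq_zero _ _ (by omega), ite_self]
  · simp only [zero_add, zero_sub, isTruncated_vec.neg_top, le_refl]
  · rw [isTruncated_vec.eq_zero _ _ (by omega), ite_self, if_neg (by omega)]

theorem lift_actGen_eq_of_rel [NeZero m] ⦃x y : FreeAlgebra K (Gen m)⦄ (h : LamRel K m N x y) :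
    FreeAlgebra.lift K (actGen K N) x = FreeAlgebra.lift K (actGen K N) y := by
  cases h with
  | idem j => simp [Efree, actGen, actE_mul_actE]
  | orth j k hjk => simp [Efree, actGen, actE_mul_actE, hjk]
  | sum_e => simp [Efree, actGen, sum_actE]
  | src_a j => simp [Efree, Afree, actGen, actE_mul_actA]
  | tgt_a j => simp [Efree, Afree, actGen, actA_mul_actE]
  | src_ab j => simp [Efree, ABfree, actGen, actE_mul_actAB]
  | tgt_ab j => simp [Efree, ABfree, actGen, actAB_mul_actE]
  | zero_aa j => simp [Afree, actGen, actA_mul_actA]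
  | zero_abab j => simp [ABfree, actGen, actAB_mul_actAB]
  | comm j => simp [Afree, ABfree, actGen, actA_mul_actAB_pow]

end Action

end PathSpace

section Basis

variable [NeZero N]

open PathSpace

/-- The action of `Λ_N` on the path space. -/
noncomputable def act : Lam K m N →ₐ[K] Module.End K (PathSpace K m N) :=
  RingQuot.liftAlgHom K ⟨FreeAlgebra.lift K (actGen K N), lift_actGen_eq_of_rel⟩

/-- The linear map sending a path, as a vector of the path space, to its class in `Λ_N`. -/
noncomputable def ofPathSpace : PathSpace K m N →ₗ[K] Lam K m N := lift K N (path K m N)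

/-- The sum of the trivial paths, corresponding to `1 : Λ_N`. -/
noncomputable def unitVec (K : Type) [Field K] (m N : ℕ) [NeZero m] : PathSpace K m N :=
  ∑ i : ZMod m, vec K N i 0

variable {K m N}

theorem act_mkAlgHom_ι (g : Gen m) :
    act K m N (RingQuot.mkAlgHom K (LamRel K m N) (FreeAlgebra.ι K g)) = actGen K N g := by
  simp [act]

theorem act_e (i : ZMod m) : act K m N (e K m N i) = actE K N i := act_mkAlgHom_ι (.e i)

theorem act_a (i : ZMod m) : act K m N (a K m N i) = actA K N i := act_mkAlgHom_ι (.a i)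

theorem act_ab (i : ZMod m) : act K m N (ab K m N i) = actAB K N i := act_mkAlgHom_ι (.abar i)

theorem ofPathSpace_vec (i : ZMod m) (l : ℤ) :
    ofPathSpace K m N (vec K N i l) = path K m N i l :=
  lift_vec ⟨fun i _ hl => path_eq_zero i hl, path_neg_top⟩ i l

theorem ofPathSpace_actGen (g : Gen m) (v : PathSpace K m N) :
    ofPathSpace K m N (actGen K N g v) =
      RingQuot.mkAlgHom K (LamRel K m N) (FreeAlgebra.ι K g) * ofPathSpace K m N v := by
  suffices h : ofPathSpace K m N ∘ₗ actGen K N g =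
      LinearMap.mulLeft K (RingQuot.mkAlgHom K (LamRel K m N) (FreeAlgebra.ι K g)) ∘ₗ
        ofPathSpace K m N from LinearMap.congr_fun h v
  refine linearMap_ext fun i l => ?_
  simp only [LinearMap.comp_apply, LinearMap.mulLeft_apply, ofPathSpace_vec]
  cases g with
  | e j =>
    rw [actGen, actE_vec, apply_ite (ofPathSpace K m N), ofPathSpace_vec, map_zero]
    exact (e_mul_path j i l).symm
  | a j =>
    rw [actGen, actA_vec, apply_ite (ofPathSpace K m N), ofPathSpace_vec, map_zero]
    exact (a_mul_path j i l).symm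
  | abar j =>
    rw [actGen, actAB_vec, apply_ite (ofPathSpace K m N), ofPathSpace_vec, map_zero]
    exact (ab_mul_path j i l).symm

theorem ofPathSpace_act (x : Lam K m N) (v : PathSpace K m N) :
    ofPathSpace K m N (act K m N x v) = x * ofPathSpace K m N v := by
  obtain ⟨x, rfl⟩ := RingQuot.mkAlgHom_surjective K (LamRel K m N) x
  induction x using FreeAlgebra.induction generalizing v with
  | grade0 r => simp [Algebra.algebraMap_eq_smul_one]
  | grade1 g => rw [act_mkAlgHom_ι, ofPathSpace_actGen]
  | mul x y hx hy => simp only [map_mul, Module.End.mul_apply, hx, hy, mul_assoc]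
  | add x y hx hy => simp only [map_add, LinearMap.add_apply, hx, hy, add_mul]

theorem ofPathSpace_unitVec : ofPathSpace K m N (unitVec K m N) = 1 := by
  simp only [unitVec, map_sum, ofPathSpace_vec, path_zero, sum_e]

theorem act_path_unitVec (i : ZMod m) (l : ℤ) :
    act K m N (path K m N i l) (unitVec K m N) = vec K N i l := by
  induction i, l using path.induct with
  | case1 i l hl ih =>
    rw [path_of_pos i hl, map_mul, Module.End.mul_apply, ih, act_a, actA_vec,
      if_pos ⟨rfl, by omega⟩, sub_sub_cancel]
  | case2 i l _ hl ih =>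
    rw [path_of_neg i hl, map_mul, Module.End.mul_apply, ih, act_ab, actAB_vec,
      if_pos ⟨rfl, by omega⟩, sub_sub_cancel, sub_add_cancel]
  | case3 i l hl hl' =>
    obtain rfl : l = 0 := by omega
    simp [unitVec, act_e, actE_vec]

variable (K m N) in
/-- The isomorphism of the path space with `Λ_N`; its inverse is the orbit map of the sum of the
trivial paths. -/
noncomputable def pathEquiv : PathSpace K m N ≃ₗ[K] Lam K m N :=
  LinearEquiv.ofLinearMap (ofPathSpace K m N)
    (LinearMap.applyₗ (unitVec K m N) ∘ₗ (act K m N).toLinearMap)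
    (LinearMap.ext fun x => by simp [ofPathSpace_act, ofPathSpace_unitVec])
    (linearMap_ext fun i l => by simp [ofPathSpace_vec, act_path_unitVec])

variable (K m N) in
/-- The basis of `Λ_N` formed by the alternating paths of signed length in `(-2N, 2N]`. -/
noncomputable def pathBasis : Module.Basis (ZMod m × ZMod (4 * N)) K (Lam K m N) :=
  .ofRepr (pathEquiv K m N).symm

theorem pathBasis_apply (p : ZMod m × ZMod (4 * N)) :
    pathBasis K m N p = path K m N p.1 p.2.valMinAbs := by
  simp only [pathBasis, Module.Basis.coe_ofRepr, LinearEquiv.symm_symm, single_eq_vec]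
  exact ofPathSpace_vec _ _

end Basis

section Counting

theorem Ioc_neg_two_mul_succ (n : ℕ) :
    Finset.Ioc (-(2 * (n + 1 : ℕ)) : ℤ) (2 * (n + 1 : ℕ)) =
      insert (-(2 * n) - 1 : ℤ) (insert (-(2 * n) : ℤ) (insert (2 * n + 1 : ℤ)
        (insert (2 * n + 2 : ℤ) (Finset.Ioc (-(2 * n) : ℤ) (2 * n))))) := by
  ext l
  simp only [Finset.mem_Ioc, Finset.mem_insert]
  omega

open Finset in
theorem card_filter_pathTarget_eq {m : ℕ} (n : ℕ) (i j : ZMod m) :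
    #{l ∈ Ioc (-(2 * n) : ℤ) (2 * n) | pathTarget i l = j} =
      (if i = j then 2 * n else 0) + (if i + 1 = j then n else 0) +
        (if i - 1 = j then n else 0) := by
  rw [card_filter]
  induction n with
  | zero => simp
  | succ n ih =>
    have target_neg_odd : pathTarget i (-(2 * n) - 1) = i - 1 := by
      rw [pathTarget, if_neg (by simp), if_neg (by omega)]
    have target_neg_even : pathTarget i (-(2 * n)) = i := by simp [pathTarget]
    have target_odd : pathTarget i (2 * n + 1) = i + 1 := by
      rw [pathTarget, if_neg (by simp), if_pos (by omega)]
    have target_even : pathTarget i (2 * n + 2) = i := by simp [pathTarget]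
    rw [Ioc_neg_two_mul_succ, sum_insert, sum_insert, sum_insert, sum_insert, ih, target_neg_odd,
      target_neg_even, target_odd, target_even]
    · split_ifs <;> ring
    all_goals simp only [mem_insert, mem_Ioc]; omega

end Counting

section Corner

variable {K m N} [NeZero N]

theorem corner_map_pathBasis (i j : ZMod m) (p : ZMod m × ZMod (4 * N)) :
    (LinearMap.mulLeft K (e K m N i) ∘ₗ LinearMap.mulRight K (e K m N j)) (pathBasis K m N p) =
      if p.1 = i ∧ pathTarget p.1 p.2.valMinAbs = j then pathBasis K m N p else 0 := by
  simp only [LinearMap.comp_apply, LinearMap.mulLeft_apply, LinearMap.mulRight_apply,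
    pathBasis_apply, path_mul_e, mul_ite, mul_zero, e_mul_path, ← ite_and, and_comm]

theorem finrank_corner (i j : ZMod m) :
    Module.finrank K (corner K m N i j) =
      (if i = j then 2 * N else 0) + (if i + 1 = j then N else 0) +
        (if i - 1 = j then N else 0) := by
  rw [← card_filter_pathTarget_eq, corner,
    finrank_range_of_basis_apply_eq_ite (pathBasis K m N) _ (corner_map_pathBasis i j),
    Fintype.card_subtype]
  refine Finset.card_nbij' (fun p => p.2.valMinAbs) (fun l => (i, (l : ZMod (4 * N)))) ?_ ?_ ?_ ?_
  · rintro ⟨i', x⟩ h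
    obtain ⟨rfl, htarget⟩ : i' = i ∧ pathTarget i' x.valMinAbs = j := by simpa using h
    exact Finset.mem_filter.2 ⟨PathSpace.valMinAbs_mem_Ioc x, htarget⟩
  · intro l h
    obtain ⟨hl, htarget⟩ := Finset.mem_filter.1 h
    simp [PathSpace.valMinAbs_intCast hl, htarget]
  · rintro ⟨i', x⟩ h
    obtain ⟨rfl, -⟩ : i' = i ∧ pathTarget i' x.valMinAbs = j := by simpa using h
    simp
  · exact fun l h => PathSpace.valMinAbs_intCast (Finset.mem_filter.1 h).1

end Corner

end Lam

theorem stmt5_general (hN : 1 ≤ N) :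
    Module.Finite K (Lam K m N) ∧
    (∀ i j : ZMod m, Module.finrank K (corner K m N i j) =
      (if i = j then 2 * N else 0) + (if i + 1 = j then N else 0) +
        (if i - 1 = j then N else 0)) ∧
    Module.finrank K (Lam K m N) = 4 * N * m := by
  have : NeZero N := ⟨by omega⟩
  refine ⟨.of_basis (Lam.pathBasis K m N), Lam.finrank_corner, ?_⟩
  rw [Module.finrank_eq_card_basis (Lam.pathBasis K m N), Fintype.card_prod, ZMod.card, ZMod.card,
    mul_comm]

theorem stmt5 (hm : 2 ≤ m) (hN : 1 ≤ N) :
    (∀ i : ZMod m, Module.finrank K (corner K m N i i) = 2 * N) ∧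
    (3 ≤ m → ∀ i j : ZMod m, (i - j = 1 ∨ j - i = 1) →
      Module.finrank K (corner K m N i j) = N) ∧
    (3 ≤ m → ∀ i j : ZMod m, i ≠ j → i - j ≠ 1 → j - i ≠ 1 →
      corner K m N i j = ⊥) ∧
    (3 ≤ m → Module.finrank K (Lam K m N) = 4 * N * m) := by
  obtain ⟨finite_lam, finrank_corner, finrank_lam⟩ := stmt5_general K m N hN
  have : Fact (1 < m) := ⟨hm⟩
  refine ⟨fun i => ?_, fun hm i j hij => ?_, fun _ i j hij hij₁ hij₂ => ?_, fun _ => finrank_lam⟩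
  · simp [finrank_corner]
  · have : Fact (2 < m) := ⟨hm⟩
    have add_one_ne_sub_one : i + 1 ≠ i - 1 := fun h =>
      ZMod.neg_one_ne_one (n := m) (by linear_combination -h)
    rcases hij with h | h
    · obtain rfl : j = i - 1 := by rw [← h, sub_sub_cancel]
      have ne_sub_one : i ≠ i - 1 := fun h => one_ne_zero (sub_eq_self.1 h.symm)
      simp [finrank_corner, add_one_ne_sub_one, ne_sub_one]
    · obtain rfl : j = i + 1 := by rw [← h, add_sub_cancel]
      simp [finrank_corner, add_one_ne_sub_one.symm]
  · rw [← Submodule.finrank_eq_zero, finrank_corner, if_neg hij, if_neg, if_neg]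
    · exact fun h => hij₁ (by rw [← h, sub_sub_cancel])
    · exact fun h => hij₂ (by rw [← h, add_sub_cancel_left])
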